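/- Under Assumptions 1.1, 1.2 and 1.3, there exists a random variable Ĉ₈ with 1 ≤ Ĉ₈ < ∞ everywhere such that, almost surely on Λ, for every real ε > 0: limsup_{n→∞} γ_n^{q̂} · sup_{k≥n} ‖θ_k − θ_n‖ ≤ Ĉ₈ φ_ε(ξ), where q̂ = min{r, r̂} − 1. -/

import Mathlib

open MeasureTheory Filter

lemma sg_neg_bern {x a : ℝ} (hx1 : x < 1) (ha : 0 ≤ a) :
    1 + a * x ≤ (1 - x) ^ (-a) := by
  have h1 : 0 < 1 - x := by linarith
  rw [Real.rpow_def_of_pos h1]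
  have h2 := Real.log_le_sub_one_of_pos h1
  have h3 := Real.add_one_le_exp (Real.log (1 - x) * -a)
  nlinarith

lemma sg_tele {a : ℝ} (ha : 0 < a) {j : ℕ} (hj : 1 ≤ j) :
    a * 2 ^ (-(a + 1)) * (j : ℝ) ^ (-(a + 1)) ≤ (j : ℝ) ^ (-a) - ((j + 1 : ℕ) : ℝ) ^ (-a) := by
  have hj0 : (1 : ℝ) ≤ j := by exact_mod_cast hj
  have hp : (0 : ℝ) < (j : ℝ) + 1 := by linarith
  push_cast
  have h1 : (1 : ℝ) - 1 / (j + 1) = j / (j + 1) := by field_simp; ring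
  have h2 : (1 : ℝ) / (j + 1) < 1 := by rw [div_lt_one hp]; linarith
  have h3 := sg_neg_bern h2 ha.le
  rw [h1, Real.div_rpow (by linarith) hp.le] at h3
  have h4 : 0 < ((j : ℝ) + 1) ^ (-a) := Real.rpow_pos_of_pos hp _
  rw [le_div_iff₀ h4] at h3
  have h5 : ((j : ℝ) + 1) ^ (-(a + 1)) = ((j : ℝ) + 1) ^ (-a) / (j + 1) := by
    rw [show -(a + 1) = -a - 1 by ring, Real.rpow_sub_one hp.ne']
  have h6 : (2 * (j : ℝ)) ^ (-(a + 1)) ≤ ((j : ℝ) + 1) ^ (-(a + 1)) :=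
    Real.rpow_le_rpow_of_nonpos hp (by linarith) (by linarith)
  rw [Real.mul_rpow (by norm_num) (by linarith), h5] at h6
  have h7 : (1 + a * (1 / ((j : ℝ) + 1))) * ((j : ℝ) + 1) ^ (-a)
      = ((j : ℝ) + 1) ^ (-a) + a * (((j : ℝ) + 1) ^ (-a) / (j + 1)) := by
    field_simp
  rw [h7] at h3
  nlinarith

lemma sg_sumtail {a : ℝ} (ha : 0 < a) {j m : ℕ} (hj : 1 ≤ j) (hm : j ≤ m) :
    ∑ i ∈ Finset.Ico j m, (i : ℝ) ^ (-(a + 1)) ≤ 2 ^ (a + 1) / a * (j : ℝ) ^ (-a) := by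
  have key : ∑ i ∈ Finset.Ico j m, (i : ℝ) ^ (-(a + 1))
      ≤ 2 ^ (a + 1) / a * ((j : ℝ) ^ (-a) - (m : ℝ) ^ (-a)) := by
    induction m, hm using Nat.le_induction with
    | base => simp
    | succ m hm ih =>
      rw [Finset.sum_Ico_succ_top hm]
      have h := sg_tele ha (hj.trans hm)
      rw [Real.rpow_neg (by norm_num : (0 : ℝ) ≤ 2)] at h
      have h2 : (0 : ℝ) < 2 ^ (a + 1) := by positivity
      have h3 : (m : ℝ) ^ (-(a + 1)) ≤
          2 ^ (a + 1) / a * ((m : ℝ) ^ (-a) - ((m + 1 : ℕ) : ℝ) ^ (-a)) := by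
        rw [div_mul_eq_mul_div, le_div_iff₀ ha]
        have h4 := mul_le_mul_of_nonneg_left h h2.le
        have h5 : (2 : ℝ) ^ (a + 1) * (a * (2 ^ (a + 1))⁻¹ * (m : ℝ) ^ (-(a + 1)))
            = (m : ℝ) ^ (-(a + 1)) * a := by
          field_simp
        linarith
      linarith
  have h1 : (0 : ℝ) ≤ (m : ℝ) ^ (-a) := by positivity
  have h2 : (0 : ℝ) < 2 ^ (a + 1) / a := by positivity
  nlinarith

lemma sg_dyadic {h : ℕ → ℝ} (hh : ∀ i, 0 ≤ h i) {q A : ℝ} (hq : 0 < q) {J : ℕ}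
    (hJ : 1 ≤ J)
    (hA : ∀ N, J ≤ N → ∑ i ∈ Finset.Ico N (2 * N), h i ≤ A * (N : ℝ) ^ (-q))
    (N : ℕ) (hN : J ≤ N) (m : ℕ) :
    ∑ i ∈ Finset.Ico N m, h i ≤ A / (1 - 2 ^ (-q)) * (N : ℝ) ^ (-q) := by
  have h2 : (2 : ℝ) ^ (-q) < 1 := Real.rpow_lt_one_of_one_lt_of_neg (by norm_num) (by linarith)
  have h3 : 0 < 1 - (2 : ℝ) ^ (-q) := by linarith
  have hA0 : 0 ≤ A := by
    have := (Finset.sum_nonneg (fun i _ => hh i)).trans (hA J le_rfl)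
    have h4 : 0 < (J : ℝ) ^ (-q) := by
      have : (0 : ℝ) < J := by exact_mod_cast hJ
      positivity
    exact nonneg_of_mul_nonneg_left this h4
  have key : ∀ k N : ℕ, J ≤ N →
      ∑ i ∈ Finset.Ico N (2 ^ k * N), h i ≤ A / (1 - 2 ^ (-q)) * (N : ℝ) ^ (-q) := by
    intro k
    induction k with
    | zero => intro N hN; simp; positivity
    | succ k ih =>
      intro N hN
      have e : 2 ^ (k + 1) * N = 2 ^ k * (2 * N) := by ring
      rw [e, ← Finset.sum_Ico_consecutive h (n := 2 * N) (by omega)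
        (Nat.le_mul_of_pos_left _ (by positivity))]
      have i1 := hA N hN
      have i2 := ih (2 * N) (by omega)
      push_cast at i2
      rw [Real.mul_rpow (by norm_num) (by positivity)] at i2
      have e2 : A * (N : ℝ) ^ (-q) + A / (1 - 2 ^ (-q)) * (2 ^ (-q) * (N : ℝ) ^ (-q))
        = A / (1 - 2 ^ (-q)) * (N : ℝ) ^ (-q) := by
        field_simp
        ring
      linarith
  refine le_trans ?_ (key m N hN)
  apply Finset.sum_le_sum_of_subset_of_nonneg
  · apply Finset.Ico_subset_Ico_right
    calc m ≤ 2 ^ m := Nat.lt_two_pow_self.le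
      _ ≤ 2 ^ m * N := Nat.le_mul_of_pos_right _ (by omega)
  · intros; exact hh _

lemma sg_decay {w R : ℕ → ℝ} {p b l : ℝ} (hp : 0 < p) (hl : 0 < l) (hb : 0 ≤ b) {J : ℕ}
    (hJ : 1 ≤ J) (hanti : ∀ j, J ≤ j → w (j + 1) ≤ w j)
    (hdich : ∀ j, J ≤ j → 0 < w j → w j ≤ 2 * R j ∨ w (j + 1) ≤ w j - l * w j ^ (1 + 1 / p))
    (hR : ∀ j, J ≤ j → R j ≤ b * (j : ℝ) ^ (-p)) (N : ℕ) (hN : J ≤ N) :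
    w (2 * N) ≤ 2 * b * (N : ℝ) ^ (-p) + (N * l / p) ^ (-p) := by
  have hN0 : (0 : ℝ) < N := by exact_mod_cast (by omega : 0 < N)
  have mono : ∀ i m, J ≤ i → i ≤ m → w m ≤ w i := by
    intro i m hi him
    induction m, him using Nat.le_induction with
    | base => exact le_rfl
    | succ m hm ih => exact (hanti m (hi.trans hm)).trans ih
  have hpos1 : 0 ≤ (N : ℝ) ^ (-p) := by positivity
  have hpos2 : 0 ≤ (N * l / p) ^ (-p) := by positivity
  by_cases hw : w (2 * N) ≤ 0
  · have : 0 ≤ 2 * b * (N : ℝ) ^ (-p) := by positivity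
    linarith
  push Not at hw
  by_cases hex : ∃ i, N ≤ i ∧ i < 2 * N ∧ w i ≤ 2 * R i
  · obtain ⟨i, h1, h2, h3⟩ := hex
    have h4 := mono i (2 * N) (by omega) h2.le
    have h5 := hR i (by omega)
    have h6 : (i : ℝ) ^ (-p) ≤ (N : ℝ) ^ (-p) :=
      Real.rpow_le_rpow_of_nonpos hN0 (by exact_mod_cast h1) (by linarith)
    nlinarith
  · push Not at hex
    have key : ∀ k : ℕ, k ≤ N → k * l / p ≤ w (N + k) ^ (-(1 / p)) := by
      intro k
      induction k with
      | zero =>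
        intro _
        have := hw.le.trans (mono N (2 * N) hN (by omega))
        simp only [Nat.cast_zero, zero_mul, zero_div, add_zero]
        exact Real.rpow_nonneg this _
      | succ k ih =>
        intro hk
        have ih := ih (by omega)
        have w0 : 0 < w (N + k) := hw.trans_le (mono _ _ (by omega) (by omega))
        have w1 : 0 < w (N + k + 1) := hw.trans_le (mono _ _ (by omega) (by omega))
        have hd := (hdich (N + k) (by omega) w0).resolve_left
          (not_le.mpr (hex (N + k) (by omega) (by omega)))
        rw [Real.rpow_add w0, Real.rpow_one] at hd
        set x := l * w (N + k) ^ (1 / p) with hx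
        have hd' : w (N + k + 1) ≤ w (N + k) * (1 - x) := by rw [hx]; linarith
        have hx1 : x < 1 := by
          by_contra hc
          push Not at hc
          nlinarith
        have hb1 := sg_neg_bern hx1 (a := 1 / p) (by positivity)
        have h7 : (w (N + k) * (1 - x)) ^ (-(1 / p)) ≤ w (N + k + 1) ^ (-(1 / p)) :=
          Real.rpow_le_rpow_of_nonpos w1 hd' (by rw [neg_nonpos]; positivity)
        rw [Real.mul_rpow w0.le (by linarith)] at h7
        have z0 : 0 < w (N + k) ^ (-(1 / p)) := Real.rpow_pos_of_pos w0 _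
        have h8 := mul_le_mul_of_nonneg_left hb1 z0.le
        have h9 : w (N + k) ^ (-(1 / p)) * w (N + k) ^ (1 / p) = 1 := by
          rw [← Real.rpow_add w0]; simp
        have h10 : w (N + k) ^ (-(1 / p)) * (1 + 1 / p * x) = w (N + k) ^ (-(1 / p)) + l / p := by
          rw [hx]
          calc _ = w (N + k) ^ (-(1 / p)) + l / p *
              (w (N + k) ^ (-(1 / p)) * w (N + k) ^ (1 / p)) := by ring
            _ = _ := by rw [h9]; ring
        rw [← add_assoc]
        have : ((k + 1 : ℕ) : ℝ) * l / p = k * l / p + l / p := by push_cast; ring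
        linarith
    have h1 := key N le_rfl
    rw [← two_mul] at h1
    have h2 : (w (2 * N) ^ (-(1 / p))) ^ (-p) ≤ (N * l / p) ^ (-p) :=
      Real.rpow_le_rpow_of_nonpos (by positivity) h1 (by linarith)
    rw [← Real.rpow_mul hw.le] at h2
    have : -(1 / p) * -p = 1 := by field_simp
    rw [this, Real.rpow_one] at h2
    have : 0 ≤ 2 * b * (N : ℝ) ^ (-p) := by positivity
    linarith

lemma sg_R {r : ℝ} (hr : 1 < r) {j : ℕ} (hj : 1 ≤ j) :
    (j : ℝ) ^ (-(2 * r)) ≤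
      2 ^ (2 * r) * ((j : ℝ) ^ (-(2 * r - 1)) - ((j + 1 : ℕ) : ℝ) ^ (-(2 * r - 1))) := by
  have h := sg_tele (a := 2 * r - 1) (by linarith) hj
  rw [show 2 * r - 1 + 1 = 2 * r by ring, Real.rpow_neg (by norm_num : (0 : ℝ) ≤ 2)] at h
  have h2 : (0 : ℝ) < 2 ^ (2 * r) := by positivity
  have h4 := mul_le_mul_of_nonneg_left h h2.le
  have h5 : (2 : ℝ) ^ (2 * r) * ((2 * r - 1) * (2 ^ (2 * r))⁻¹ * (j : ℝ) ^ (-(2 * r)))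
      = (2 * r - 1) * (j : ℝ) ^ (-(2 * r)) := by
    field_simp
  have h6 : 0 ≤ (j : ℝ) ^ (-(2 * r)) := by positivity
  nlinarith

lemma sg_R_tendsto {r : ℝ} (hr : 1 < r) (b : ℝ) :
    Tendsto (fun j : ℕ => b * (j : ℝ) ^ (-(2 * r - 1))) atTop (nhds 0) := by
  have := (tendsto_rpow_neg_atTop (y := 2 * r - 1) (by linarith)).comp
    (tendsto_natCast_atTop_atTop (R := ℝ))
  simpa using this.const_mul b

lemma sg_conv {y g : ℕ → ℝ} {c b r B : ℝ} (hc : 0 < c) (hb : 0 ≤ b) (hr : 1 < r)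
    (hg : ∀ j, 0 ≤ g j) (hB : ∀ j, B ≤ y j)
    (hy : ∀ᶠ j : ℕ in atTop, y (j + 1) ≤ y j - c * g j ^ 2 + b * (j : ℝ) ^ (-(2 * r))) :
    (∃ l, Tendsto y atTop (nhds l)) ∧ Tendsto g atTop (nhds 0) := by
  obtain ⟨J, hJ⟩ := eventually_atTop.mp hy
  set R : ℕ → ℝ := fun j => b * 2 ^ (2 * r) * (j : ℝ) ^ (-(2 * r - 1)) with hR
  have hRt : Tendsto R atTop (nhds 0) := sg_R_tendsto hr _
  have hR0 : ∀ j, 0 ≤ R j := fun j => by positivity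
  set w : ℕ → ℝ := fun j => y (j + (J + 1)) + R (j + (J + 1)) with hw
  have step : ∀ j, w (j + 1) ≤ w j - c * g (j + (J + 1)) ^ 2 := by
    intro j
    have h1 := hJ (j + (J + 1)) (by omega)
    have h2 := mul_le_mul_of_nonneg_left (sg_R hr (j := j + (J + 1)) (by omega)) hb
    simp only [hw, hR]
    rw [show j + 1 + (J + 1) = j + (J + 1) + 1 by ring]
    nlinarith
  have anti : Antitone w := antitone_nat_of_succ_le fun j => by
    have := step j
    have : 0 ≤ c * g (j + (J + 1)) ^ 2 := by positivity
    linarith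
  have bdd : BddBelow (Set.range w) := by
    refine ⟨B, ?_⟩
    rintro _ ⟨j, rfl⟩
    have := hB (j + (J + 1))
    have := hR0 (j + (J + 1))
    simp only [hw]; linarith
  have hwt := tendsto_atTop_ciInf anti bdd
  set l := ⨅ i, w i
  have hRt' : Tendsto (fun j => R (j + (J + 1))) atTop (nhds 0) :=
    hRt.comp (tendsto_add_atTop_nat _)
  refine ⟨⟨l, ?_⟩, ?_⟩
  · rw [← tendsto_add_atTop_iff_nat (J + 1)]
    have := hwt.sub hRt'
    simpa [hw] using this
  · rw [← tendsto_add_atTop_iff_nat (J + 1)]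
    have h1 : Tendsto (fun j => (w j - w (j + 1)) / c) atTop (nhds 0) := by
      have := (hwt.sub (hwt.comp (tendsto_add_atTop_nat 1))).div_const c
      simpa using this
    have h2 : Tendsto (fun j => g (j + (J + 1)) ^ 2) atTop (nhds 0) := by
      refine squeeze_zero (fun j => sq_nonneg _) (fun j => ?_) h1
      rw [le_div_iff₀ hc]
      have := step j
      linarith
    have h3 := h2.sqrt
    simp only [Real.sqrt_zero] at h3
    refine h3.congr fun j => Real.sqrt_sq (hg _)

lemma sg_rate {y g : ℕ → ℝ} {c K M μ ρ r : ℝ} (hc : 0 < c) (hK : 0 ≤ K) (hM : 0 < M)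
    (hμ : 0 < μ) (hρ : 1 < ρ) (hρr : ρ ≤ r) (hg : ∀ j, 0 ≤ g j)
    (hy0 : Tendsto y atTop (nhds 0)) (hLoj : ∀ᶠ j in atTop, |y j| ≤ M * g j ^ μ) :
    ∃ C, 0 < C ∧ ∀ s : ℝ, 0 < s →
      (∀ᶠ j : ℕ in atTop, y (j + 1) ≤ y j - c * g j ^ 2 + K * s ^ 2 * (j : ℝ) ^ (-(2 * r))) →
      (∀ᶠ x in nhdsWithin (0 : ℝ) (Set.Ioi 0),
        s ^ (-(2 / (2 * ρ - 1))) * x ^ (1 + 1 / (2 * ρ - 1)) ≤ c * (x / (2 * M)) ^ (2 / μ)) →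
      ∀ᶠ N : ℕ in atTop, ∀ m,
        ∑ i ∈ Finset.Ico N m, g i ≤ C * s * (N : ℝ) ^ (-(ρ - 1)) := by
  set p := 2 * ρ - 1 with hp
  have hp0 : 0 < p := by linarith
  have hr : 1 < r := by linarith
  set C1 : ℝ := 2 * (K * 2 ^ (2 * r)) + p ^ p with hC1
  have hC1p : 0 < C1 := by positivity
  set A : ℝ := Real.sqrt (C1 * 3 ^ p / c) with hA
  have hAp : 0 < A := Real.sqrt_pos.mpr (by positivity)
  have h2 : (2 : ℝ) ^ (-(ρ - 1)) < 1 :=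
    Real.rpow_lt_one_of_one_lt_of_neg (by norm_num) (by linarith)
  have h3 : 0 < 1 - (2 : ℝ) ^ (-(ρ - 1)) := by linarith
  refine ⟨A / (1 - 2 ^ (-(ρ - 1))), by positivity, fun s hs hrec hx => ?_⟩
  set R : ℕ → ℝ := fun j => K * s ^ 2 * 2 ^ (2 * r) * (j : ℝ) ^ (-(2 * r - 1)) with hR
  have hRt : Tendsto R atTop (nhds 0) := sg_R_tendsto hr _
  have hR0 : ∀ j, 0 ≤ R j := fun j => by positivity
  set w : ℕ → ℝ := fun j => y j + R j with hw
  have hwt : Tendsto w atTop (nhds 0) := by simpa using hy0.add hRt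
  obtain ⟨u, hu, hxu⟩ := (mem_nhdsGT_iff_exists_Ioo_subset).mp hx
  have hu0 : (0 : ℝ) < u := hu
  have hwu : ∀ᶠ j in atTop, w j < u := hwt.eventually (gt_mem_nhds hu0)
  obtain ⟨J0, hJ0⟩ := eventually_atTop.mp (hrec.and (hLoj.and hwu))
  set J := J0 + 1 with hJ
  have step : ∀ j, J ≤ j → w (j + 1) ≤ w j - c * g j ^ 2 := by
    intro j hj
    have h1 := (hJ0 j (by omega)).1
    have h2 := mul_le_mul_of_nonneg_left (sg_R hr (j := j) (by omega))
      (by positivity : 0 ≤ K * s ^ 2)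
    simp only [hw, hR]
    nlinarith
  have hanti : ∀ j, J ≤ j → w (j + 1) ≤ w j := by
    intro j hj
    have := step j hj
    have : 0 ≤ c * g j ^ 2 := by positivity
    linarith
  have mono : ∀ i m, J ≤ i → i ≤ m → w m ≤ w i := by
    intro i m hi him
    induction m, him using Nat.le_induction with
    | base => exact le_rfl
    | succ m hm ih => exact (hanti m (hi.trans hm)).trans ih
  have wnn : ∀ j, J ≤ j → 0 ≤ w j := by
    intro j hj
    refine le_of_tendsto hwt ?_
    filter_upwards [eventually_ge_atTop j] with m hm using mono j m hj hm
  have hdich : ∀ j, J ≤ j → 0 < w j →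
      w j ≤ 2 * R j ∨ w (j + 1) ≤ w j - s ^ (-(2 / p)) * w j ^ (1 + 1 / p) := by
    intro j hj hwj
    by_cases hc1 : w j ≤ 2 * R j
    · exact Or.inl hc1
    · right
      push Not at hc1
      have h1 := hxu (show w j ∈ Set.Ioo 0 u from ⟨hwj, (hJ0 j (by omega)).2.2⟩)
      simp only [Set.mem_ofPred_eq] at h1
      have h4 : w j / (2 * M) ≤ g j ^ μ := by
        have h5 := (hJ0 j (by omega)).2.1
        have h6 := le_abs_self (y j)
        have h7 : w j = y j + R j := rfl
        rw [div_le_iff₀ (by positivity)]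
        nlinarith
      have h8 : (w j / (2 * M)) ^ (2 / μ) ≤ g j ^ 2 := by
        have := Real.rpow_le_rpow (by positivity) h4 (by positivity : 0 ≤ 2 / μ)
        rw [← Real.rpow_mul (hg j), show μ * (2 / μ) = 2 by field_simp] at this
        exact_mod_cast this
      have := step j hj
      nlinarith
  have hRb : ∀ j, J ≤ j → R j ≤ K * s ^ 2 * 2 ^ (2 * r) * (j : ℝ) ^ (-p) := by
    intro j hj
    simp only [hR]
    apply mul_le_mul_of_nonneg_left _ (by positivity)
    apply Real.rpow_le_rpow_of_exponent_le
    · exact_mod_cast (by omega : 1 ≤ j)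
    · linarith
  have hdec := sg_decay hp0 (by positivity : 0 < s ^ (-(2 / p)))
    (by positivity : 0 ≤ K * s ^ 2 * 2 ^ (2 * r)) (by omega : 1 ≤ J) hanti hdich hRb
  have hdec2 : ∀ N : ℕ, J ≤ N → w (2 * N) ≤ C1 * s ^ 2 * (N : ℝ) ^ (-p) := by
    intro N hN
    have h1 := hdec N hN
    have hs2 : (s ^ (-(2 / p))) ^ (-p) = s ^ 2 := by
      rw [← Real.rpow_mul hs.le, show -(2 / p) * -p = 2 by field_simp]
      norm_cast
    have hpp : (p ^ (-p))⁻¹ = p ^ p := by rw [Real.rpow_neg hp0.le, inv_inv]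
    rw [Real.div_rpow (by positivity) hp0.le, Real.mul_rpow (by positivity) (by positivity),
      hs2, div_eq_mul_inv, hpp] at h1
    rw [hC1]
    linarith
  have hdec3 : ∀ N : ℕ, 2 * J ≤ N → w N ≤ C1 * 3 ^ p * s ^ 2 * (N : ℝ) ^ (-p) := by
    intro N hN
    have h1 := hdec2 (N / 2) (by omega)
    have h4 := mono (2 * (N / 2)) N (by omega) (by omega)
    have hN0 : (0 : ℝ) < N := by exact_mod_cast (by omega : 0 < N)
    have h5 : ((N / 2 : ℕ) : ℝ) ^ (-p) ≤ (N / 3 : ℝ) ^ (-p) := by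
      apply Real.rpow_le_rpow_of_nonpos (by positivity) _ (by linarith)
      rw [div_le_iff₀ (by norm_num)]
      exact_mod_cast (by omega : N ≤ N / 2 * 3)
    rw [Real.div_rpow hN0.le (by norm_num), Real.rpow_neg (by norm_num : (0 : ℝ) ≤ 3),
      div_inv_eq_mul] at h5
    have h6 := mul_le_mul_of_nonneg_left h5 (by positivity : 0 ≤ C1 * s ^ 2)
    linarith
  have hsq : ∀ N m : ℕ, J ≤ N → N ≤ m → c * ∑ i ∈ Finset.Ico N m, g i ^ 2 ≤ w N - w m := by
    intro N m hN hm
    induction m, hm using Nat.le_induction with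
    | base => simp
    | succ m hm ih =>
      rw [Finset.sum_Ico_succ_top hm]
      have := step m (hN.trans hm)
      linarith
  have hfin := sg_dyadic hg (q := ρ - 1) (A := A * s) (by linarith) (J := 2 * J) (by omega) (by
    intro N hN
    have hN0 : (0 : ℝ) < N := by exact_mod_cast (by omega : 0 < N)
    refine (sq_le_sq₀ (Finset.sum_nonneg fun i _ => hg i) (by positivity)).mp ?_
    have h1 := sq_sum_le_card_mul_sum_sq (s := Finset.Ico N (2 * N)) (f := g)
    rw [Nat.card_Ico, show 2 * N - N = N by omega] at h1
    have h4 := hsq N (2 * N) (by omega) (by omega)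
    have h5 := wnn (2 * N) (by omega)
    have h6 := hdec3 N hN
    have h7 : ∑ i ∈ Finset.Ico N (2 * N), g i ^ 2 ≤
        C1 * 3 ^ p * s ^ 2 * (N : ℝ) ^ (-p) / c := by
      rw [le_div_iff₀ hc]; linarith
    have h8 : (A * s * (N : ℝ) ^ (-(ρ - 1))) ^ 2 =
        N * (C1 * 3 ^ p * s ^ 2 * (N : ℝ) ^ (-p) / c) := by
      rw [mul_pow, mul_pow, hA, Real.sq_sqrt (by positivity), ← Real.rpow_natCast (_ ^ _),
        ← Real.rpow_mul hN0.le]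
      have : -(ρ - 1) * ((2 : ℕ) : ℝ) = 1 + -p := by rw [hp]; push_cast; ring
      rw [this, Real.rpow_add hN0, Real.rpow_one]
      ring
    rw [h8]
    exact h1.trans (mul_le_mul_of_nonneg_left h7 hN0.le))
  filter_upwards [eventually_ge_atTop (2 * J)] with N hN m
  have := hfin N hN m
  calc _ ≤ _ := this
    _ = _ := by ring

lemma sg_abel {E : Type*} [NormedAddCommGroup E] [NormedSpace ℝ E] {b : ℕ → ℝ} {y : ℕ → E}
    {n m : ℕ} {s : ℝ} (hb0 : ∀ i, n ≤ i → 0 ≤ b i) (hb : ∀ i, n ≤ i → b (i + 1) ≤ b i)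
    (hs : ∀ k, n ≤ k → k < m → ‖∑ i ∈ Finset.Icc n k, y i‖ ≤ s) :
    ∀ k, n ≤ k → k < m → ‖∑ i ∈ Finset.Icc n k, b i • y i‖ ≤ b n * s := by
  have key : ∀ k, n ≤ k → k < m →
      ‖∑ i ∈ Finset.Icc n k, b i • y i - b k • ∑ i ∈ Finset.Icc n k, y i‖ ≤ (b n - b k) * s := by
    intro k hk
    induction k, hk using Nat.le_induction with
    | base => intro _; simp
    | succ k hk ih =>
      intro hkm
      have ih := ih (by omega)
      rw [Finset.sum_Icc_succ_top (by omega), Finset.sum_Icc_succ_top (by omega)]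
      have e : ∑ i ∈ Finset.Icc n k, b i • y i + b (k + 1) • y (k + 1)
          - b (k + 1) • (∑ i ∈ Finset.Icc n k, y i + y (k + 1))
          = (∑ i ∈ Finset.Icc n k, b i • y i - b k • ∑ i ∈ Finset.Icc n k, y i)
            + (b k - b (k + 1)) • ∑ i ∈ Finset.Icc n k, y i := by
        rw [sub_smul, smul_add]; abel
      rw [e]
      refine (norm_add_le _ _).trans ?_
      rw [norm_smul, Real.norm_of_nonneg (sub_nonneg.mpr (hb k hk))]
      have := mul_le_mul_of_nonneg_left (hs k hk (by omega)) (sub_nonneg.mpr (hb k hk))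
      linarith
  intro k hk hkm
  have h1 := key k hk hkm
  have h2 := norm_add_le (∑ i ∈ Finset.Icc n k, b i • y i - b k • ∑ i ∈ Finset.Icc n k, y i)
    (b k • ∑ i ∈ Finset.Icc n k, y i)
  rw [sub_add_cancel, norm_smul, Real.norm_of_nonneg (hb0 k hk)] at h2
  have := mul_le_mul_of_nonneg_left (hs k hk hkm) (hb0 k hk)
  linarith

lemma sg_descent {E : Type*} [NormedAddCommGroup E] [InnerProductSpace ℝ E] [CompleteSpace E]
    {f : E → ℝ} (hf : Differentiable ℝ f) {S : Set E} (hS : Convex ℝ S) {L : ℝ} (hL : 0 ≤ L)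
    (hLip : ∀ x ∈ S, ∀ y ∈ S, ‖gradient f y - gradient f x‖ ≤ L * ‖y - x‖)
    {x y : E} (hx : x ∈ S) (hy : y ∈ S) :
    |f y - f x - inner ℝ (gradient f x) (y - x)| ≤ L * ‖y - x‖ ^ 2 := by
  have h := Convex.norm_image_sub_le_of_norm_hasFDerivWithin_le' (𝕜 := ℝ) (f := f)
    (s := segment ℝ x y) (x := x) (y := y) (C := L * ‖y - x‖)
    (f' := fun z => (InnerProductSpace.toDual ℝ E) (gradient f z))
    (φ := (InnerProductSpace.toDual ℝ E) (gradient f x))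
    (fun z _ => ((hf z).hasGradientAt.hasFDerivAt).hasFDerivWithinAt)
    (fun z hz => by
      rw [← map_sub, LinearIsometryEquiv.norm_map]
      refine (hLip x hx z (hS.segment_subset hx hy hz)).trans ?_
      apply mul_le_mul_of_nonneg_left _ hL
      obtain ⟨t, ht, rfl⟩ := (segment_eq_image' ℝ x y ▸ hz : z ∈ (fun t : ℝ => x + t • (y - x)) '' Set.Icc 0 1)
      simp only [add_sub_cancel_left, norm_smul, Real.norm_of_nonneg ht.1]
      exact mul_le_of_le_one_left (norm_nonneg _) ht.2)
    (convex_segment x y) (left_mem_segment ℝ x y) (right_mem_segment ℝ x y)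
  rw [InnerProductSpace.toDual_apply_apply, Real.norm_eq_abs] at h
  calc _ ≤ _ := h
    _ = _ := by ring

lemma sg_block {E : Type*} [NormedAddCommGroup E] [InnerProductSpace ℝ E] [CompleteSpace E]
    {f : E → ℝ} (hf : Differentiable ℝ f) {S : Set E} (hS : Convex ℝ S) {L : ℝ} (hL : 0 ≤ L)
    (hLip : ∀ x ∈ S, ∀ y ∈ S, ‖gradient f y - gradient f x‖ ≤ L * ‖y - x‖)
    {x z : ℕ → E} (hx : ∀ n, x n ∈ S) {α γ : ℕ → ℝ} (hα : ∀ n, 0 < α n)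
    (hrec : ∀ n, x (n + 1) = x n - α n • (gradient f (x n) + z n))
    (hγ : ∀ n, γ (n + 1) = γ n + α n)
    {T : ℝ} (hT : 0 < T) (hTL : T * L ≤ 1 / 32) {n m : ℕ} (hnm : n ≤ m)
    (h1 : T / 2 ≤ γ m - γ n) (h2 : γ m - γ n ≤ T) {η : ℝ} (hη : 0 ≤ η)
    (hz : ∀ k, n ≤ k → k ≤ m → ‖∑ i ∈ Finset.Ico n k, α i • z i‖ ≤ η) :
    (∀ k, n ≤ k → k ≤ m → ‖x k - x n‖ ≤ 2 * (T * ‖gradient f (x n)‖ + η)) ∧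
    f (x m) ≤ f (x n) - T / 8 * ‖gradient f (x n)‖ ^ 2 + (8 * L + 5 / T) * η ^ 2 := by
  set g := ‖gradient f (x n)‖ with hg
  have hg0 : 0 ≤ g := norm_nonneg _
  set D := 2 * (T * g + η) with hD
  have hD0 : 0 ≤ D := by positivity
  have hsumγ : ∀ k, n ≤ k → ∑ i ∈ Finset.Ico n k, α i = γ k - γ n := by
    intro k hk
    induction k, hk using Nat.le_induction with
    | base => simp
    | succ k hk ih => rw [Finset.sum_Ico_succ_top hk, ih, hγ]; ring
  have γmono : Monotone γ := monotone_nat_of_le_succ fun k => by rw [hγ]; linarith [hα k]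
  have hxk : ∀ k, n ≤ k → x k - x n = - ((γ k - γ n) • gradient f (x n))
      - ∑ i ∈ Finset.Ico n k, α i • (gradient f (x i) - gradient f (x n))
      - ∑ i ∈ Finset.Ico n k, α i • z i := by
    intro k hk
    induction k, hk using Nat.le_induction with
    | base => simp
    | succ k hk ih =>
      rw [Finset.sum_Ico_succ_top hk, Finset.sum_Ico_succ_top hk, hrec, hγ]
      have : x k - α k • (gradient f (x k) + z k) - x n
        = (x k - x n) - α k • (gradient f (x k) + z k) := by abel
      rw [this, ih]
      module
  have hE : ∀ k, n ≤ k → k ≤ m → (∀ i, n ≤ i → i < k → ‖x i - x n‖ ≤ D) →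
      ‖∑ i ∈ Finset.Ico n k, α i • (gradient f (x i) - gradient f (x n))‖ ≤ T * L * D := by
    intro k hk hkm hi
    have hb : ‖∑ i ∈ Finset.Ico n k, α i • (gradient f (x i) - gradient f (x n))‖
        ≤ ∑ i ∈ Finset.Ico n k, α i * (L * D) := by
      apply norm_sum_le_of_le
      intro i hi'
      rw [Finset.mem_Ico] at hi'
      rw [norm_smul, Real.norm_of_nonneg (hα i).le]
      apply mul_le_mul_of_nonneg_left _ (hα i).le
      exact (hLip _ (hx n) _ (hx i)).trans
        (mul_le_mul_of_nonneg_left (hi i hi'.1 hi'.2) hL)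
    rw [← Finset.sum_mul, hsumγ k hk] at hb
    refine hb.trans ?_
    rw [mul_assoc]
    exact mul_le_mul_of_nonneg_right (by linarith [γmono hkm]) (by positivity)
  have hDk : ∀ k, n ≤ k → k ≤ m → ‖x k - x n‖ ≤ D := by
    intro k
    induction k using Nat.strong_induction_on with
    | _ k ih =>
      intro hk hkm
      have e1 := hE k hk hkm (fun i hi hik => ih i hik hi (by omega))
      have e2 := hz k hk hkm
      rw [hxk k hk]
      have e3 : ‖(γ k - γ n) • gradient f (x n)‖ ≤ T * g := by
        rw [norm_smul, Real.norm_of_nonneg (by linarith [γmono hk])]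
        exact mul_le_mul_of_nonneg_right (by linarith [γmono hkm]) hg0
      refine (norm_sub_le _ _).trans ?_
      have e4 := norm_sub_le (-((γ k - γ n) • gradient f (x n)))
        (∑ i ∈ Finset.Ico n k, α i • (gradient f (x i) - gradient f (x n)))
      rw [norm_neg] at e4
      nlinarith
  refine ⟨hDk, ?_⟩
  have hd := (abs_le.mp (sg_descent hf hS hL hLip (hx n) (hx m))).2
  have e1 := hE m hnm le_rfl (fun i hi him => hDk i hi him.le)
  have e2 := hz m hnm le_rfl
  have e3 := hDk m hnm le_rfl
  have hin : inner ℝ (gradient f (x n)) (x m - x n) ≤ - (γ m - γ n) * g ^ 2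
      + g * (T * L * D + η) := by
    rw [hxk m hnm, sub_sub, inner_sub_right, inner_neg_right, inner_smul_right,
      real_inner_self_eq_norm_sq]
    have c1 := abs_le.mp (abs_real_inner_le_norm (gradient f (x n))
      (∑ i ∈ Finset.Ico n m, α i • (gradient f (x i) - gradient f (x n)) +
        ∑ i ∈ Finset.Ico n m, α i • z i))
    have c2 := norm_add_le (∑ i ∈ Finset.Ico n m, α i • (gradient f (x i) - gradient f (x n)))
        (∑ i ∈ Finset.Ico n m, α i • z i)
    have c3 := mul_le_mul_of_nonneg_left (c2.trans (add_le_add e1 e2)) hg0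
    rw [← hg] at c1 ⊢
    linarith [c1.1]
  have hD2 : L * ‖x m - x n‖ ^ 2 ≤ L * D ^ 2 :=
    mul_le_mul_of_nonneg_left (pow_le_pow_left₀ (norm_nonneg _) e3 2) hL
  have q1 : L * D ^ 2 ≤ T / 4 * g ^ 2 + 8 * L * η ^ 2 := by
    have a1 : L * D ^ 2 ≤ 8 * L * (T * g) ^ 2 + 8 * L * η ^ 2 := by
      rw [hD]; nlinarith [mul_nonneg hL (sq_nonneg (T * g - η))]
    have a2 : 8 * L * (T * g) ^ 2 = 8 * (T * L) * (T * g ^ 2) := by ring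
    have a3 : 0 ≤ T * g ^ 2 := by positivity
    nlinarith
  have q2 : g * (T * L * D + η) ≤ T / 16 * g ^ 2 + 17 / 16 * (g * η) := by
    have a1 : T * L * D ≤ 1 / 32 * D := mul_le_mul_of_nonneg_right hTL hD0
    have a2 : g * (T * L * D + η) ≤ g * (1 / 32 * D + η) :=
      mul_le_mul_of_nonneg_left (by linarith) hg0
    rw [hD] at a2 ⊢
    nlinarith
  have q3 : 17 / 16 * (g * η) ≤ T / 16 * g ^ 2 + 5 / T * η ^ 2 := by
    have a1 : 17 / 16 * (g * η) * T ≤ (T / 16 * g ^ 2 + 5 / T * η ^ 2) * T := by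
      have : (T / 16 * g ^ 2 + 5 / T * η ^ 2) * T = (T * g) ^ 2 / 16 + 5 * η ^ 2 := by
        field_simp
      rw [this]
      nlinarith [sq_nonneg (T * g / 4 - 17 / 8 * η), sq_nonneg η]
    exact le_of_mul_le_mul_right a1 hT
  have q4 : T / 2 * g ^ 2 ≤ (γ m - γ n) * g ^ 2 :=
    mul_le_mul_of_nonneg_right h1 (sq_nonneg g)
  linarith

lemma sg_blocks {α γ : ℕ → ℝ} (hα : ∀ n, 0 < α n) (hγ : ∀ n, γ (n + 1) = γ n + α n)
    (hdiv : Tendsto γ atTop atTop) {T : ℝ} (hT : 0 < T) {n0 : ℕ}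
    (hn0 : ∀ i, n0 ≤ i → α i ≤ T / 2) :
    ∃ φ : ℕ → ℕ, StrictMono φ ∧ φ 0 = n0 ∧
      ∀ j, T / 2 ≤ γ (φ (j + 1)) - γ (φ j) ∧ γ (φ (j + 1)) - γ (φ j) ≤ T := by
  have hex : ∀ n : ℕ, n0 ≤ n → ∃ m, n < m ∧ T / 2 ≤ γ m - γ n ∧ γ m - γ n ≤ T := by
    intro n hn
    have h1 : ∃ k, γ n + T / 2 ≤ γ (n + k) := by
      obtain ⟨m, hm⟩ := ((hdiv.eventually_ge_atTop (γ n + T / 2)).and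
        (eventually_ge_atTop n)).exists
      exact ⟨m - n, by rw [show n + (m - n) = m by omega]; exact hm.1⟩
    classical
    have hs := Nat.find_spec h1
    have hmin := fun k (hk : k < Nat.find h1) => Nat.find_min h1 hk
    set k := Nat.find h1
    have hk : k ≠ 0 := by
      intro h0
      rw [h0] at hs
      simp only [add_zero] at hs
      linarith
    obtain ⟨k', hk'⟩ := Nat.exists_eq_succ_of_ne_zero hk
    have h2 := hmin k' (by omega)
    push Not at h2
    refine ⟨n + k, by omega, by linarith, ?_⟩
    rw [hk', Nat.succ_eq_add_one, ← add_assoc, hγ]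
    have := hn0 (n + k') (by omega)
    linarith
  choose! F hF using hex
  set φ : ℕ → ℕ := fun j => F^[j] n0 with hφ
  have hsucc : ∀ j, φ (j + 1) = F (φ j) := fun j => Function.iterate_succ_apply' F j n0
  have hge : ∀ j, n0 ≤ φ j := by
    intro j
    induction j with
    | zero => simp [hφ]
    | succ j ih => rw [hsucc]; exact ih.trans (hF _ ih).1.le
  refine ⟨φ, strictMono_nat_of_lt_succ fun j => ?_, by simp [hφ], fun j => ?_⟩
  · rw [hsucc]; exact (hF _ (hge j)).1
  · rw [hsucc]; exact (hF _ (hge j)).2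

lemma sg_index {φ : ℕ → ℕ} (hφ : StrictMono φ) {J n : ℕ} (hn : φ J ≤ n) :
    ∃ j, J ≤ j ∧ φ j ≤ n ∧ n < φ (j + 1) := by
  have h1 : ∃ k, n < φ (J + k) := ⟨n + 1, lt_of_lt_of_le (by omega) (hφ.le_apply (x := J + (n + 1)))⟩
  classical
  have hs := Nat.find_spec h1
  have hmin := fun k (hk : k < Nat.find h1) => Nat.find_min h1 hk
  set k := Nat.find h1
  have hk : k ≠ 0 := by
    intro h0
    rw [h0] at hs
    simp only [add_zero] at hs
    omega
  obtain ⟨k', hk'⟩ := Nat.exists_eq_succ_of_ne_zero hk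
  have h2 := hmin k' (by omega)
  refine ⟨J + k', by omega, by omega, ?_⟩
  rw [hk'] at hs
  exact hs

lemma sg_noise {E : Type*} [NormedAddCommGroup E] [NormedSpace ℝ E] {α γ : ℕ → ℝ} {z : ℕ → E}
    (hγm : Monotone γ) (hdiv : Tendsto γ atTop atTop) {r : ℝ} (hr : 0 < r) {n A : ℕ}
    (hA : A = sSup {k | n ≤ k ∧ γ k - γ n ≤ 1}) {s : ℝ} (hs : 0 ≤ s)
    (hns : (⨆ k ∈ Set.Ico n A, ‖∑ i ∈ Finset.Icc n k, (α i * γ i ^ r) • z i‖) ≤ s)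
    (hγn : 0 < γ n) {m : ℕ} (hnm : n ≤ m) (hm : γ m - γ n ≤ 1) :
    ∀ k, n ≤ k → k ≤ m → ‖∑ i ∈ Finset.Ico n k, α i • z i‖ ≤ s * γ n ^ (-r) := by
  have hbdd : BddAbove {k | n ≤ k ∧ γ k - γ n ≤ 1} := by
    obtain ⟨N, hN⟩ := eventually_atTop.mp (hdiv.eventually_gt_atTop (γ n + 1))
    refine ⟨N, fun k hk => ?_⟩
    by_contra hc
    push Not at hc
    have := hN k hc.le
    have := hk.2
    linarith
  have hmA : m ≤ A := by rw [hA]; exact le_csSup hbdd ⟨hnm, hm⟩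
  have hS : ∀ k, n ≤ k → k < m → ‖∑ i ∈ Finset.Icc n k, (α i * γ i ^ r) • z i‖ ≤ s := by
    intro k hk hkm
    refine le_trans ?_ hns
    have hkA : k ∈ Set.Ico n A := ⟨hk, by omega⟩
    set F : ℕ → ℝ := fun k => ‖∑ i ∈ Finset.Icc n k, (α i * γ i ^ r) • z i‖ with hF
    have hF0 : ∀ k, 0 ≤ F k := fun k => norm_nonneg _
    have hb : BddAbove (Set.range fun k => ⨆ (_ : k ∈ Set.Ico n A), F k) := by
      refine ⟨∑ k ∈ Finset.Ico n A, F k, ?_⟩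
      rintro _ ⟨j, rfl⟩
      apply Real.iSup_le
      · intro hj
        exact Finset.single_le_sum (f := F) (fun i _ => hF0 i) (Finset.mem_Ico.mpr hj)
      · exact Finset.sum_nonneg fun i _ => hF0 i
    have h1 := le_ciSup hb k
    simp only [ciSup_pos hkA] at h1
    exact h1
  have hγi : ∀ i, n ≤ i → 0 < γ i := fun i hi => hγn.trans_le (hγm hi)
  have hab := sg_abel (b := fun i => γ i ^ (-r)) (y := fun i => (α i * γ i ^ r) • z i)
    (n := n) (m := m) (s := s) (fun i hi => (Real.rpow_pos_of_pos (hγi i hi) _).le)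
    (fun i hi => Real.rpow_le_rpow_of_nonpos (hγi i hi) (hγm (Nat.le_succ i)) (by linarith)) hS
  intro k hk hkm
  rcases Nat.eq_or_lt_of_le hk with rfl | hlt
  · simp only [Finset.Ico_self, Finset.sum_empty, norm_zero]
    exact mul_nonneg hs (Real.rpow_pos_of_pos hγn _).le
  · have h1 := hab (k - 1) (by omega) (by omega)
    have e : Finset.Icc n (k - 1) = Finset.Ico n k := by
      ext i; simp only [Finset.mem_Icc, Finset.mem_Ico]; omega
    rw [e] at h1
    have e2 : ∑ i ∈ Finset.Ico n k, γ i ^ (-r) • (α i * γ i ^ r) • z i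
        = ∑ i ∈ Finset.Ico n k, α i • z i := by
      apply Finset.sum_congr rfl
      intro i hi
      have hp := hγi i (Finset.mem_Ico.mp hi).1
      rw [smul_smul, Real.rpow_neg hp.le]
      congr 1
      have := (Real.rpow_pos_of_pos hp r).ne'
      field_simp
    rw [e2] at h1
    linarith

/-- Block noise bound. -/
def SgNB {E : Type*} [NormedAddCommGroup E] [NormedSpace ℝ E] (α γ : ℕ → ℝ) (z : ℕ → E)
    (r s : ℝ) : Prop :=
  ∀ᶠ n in atTop, ∀ m, n ≤ m → γ m - γ n ≤ 1 →
    ∀ k, n ≤ k → k ≤ m → ‖∑ i ∈ Finset.Ico n k, α i • z i‖ ≤ s * γ n ^ (-r)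

lemma sg_setup {E : Type*} [NormedAddCommGroup E] [InnerProductSpace ℝ E] [CompleteSpace E]
    {f : E → ℝ} (hf : Differentiable ℝ f) {S : Set E} (hS : Convex ℝ S) {L : ℝ} (hL : 0 ≤ L)
    (hLip : ∀ x ∈ S, ∀ y ∈ S, ‖gradient f y - gradient f x‖ ≤ L * ‖y - x‖)
    {x z : ℕ → E} (hx : ∀ n, x n ∈ S) {α γ : ℕ → ℝ} (hα : ∀ n, 0 < α n)
    (hrec : ∀ n, x (n + 1) = x n - α n • (gradient f (x n) + z n))
    (hγ0 : γ 0 = 0) (hγ : ∀ n, γ (n + 1) = γ n + α n)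
    (hα0 : Tendsto α atTop (nhds 0)) (hdiv : Tendsto γ atTop atTop) {r : ℝ} (hr : 1 < r) :
    ∃ (φ : ℕ → ℕ) (c K D t : ℝ), StrictMono φ ∧ 0 < c ∧ 0 ≤ K ∧ 0 < D ∧ 0 < t ∧
      (∀ j, 1 ≤ j → γ (φ (j + 1)) ≤ t * j) ∧
      ∀ s, 0 < s → SgNB α γ z r s → ∀ᶠ j : ℕ in atTop,
        (∀ k, φ j ≤ k → k ≤ φ (j + 1) →
          ‖x k - x (φ j)‖ ≤ D * (‖gradient f (x (φ j))‖ + s * (j : ℝ) ^ (-r))) ∧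
        f (x (φ (j + 1))) ≤ f (x (φ j)) - c * ‖gradient f (x (φ j))‖ ^ 2
          + K * s ^ 2 * (j : ℝ) ^ (-(2 * r)) := by
  set T : ℝ := min 1 (1 / (32 * (L + 1))) with hT
  have hT0 : 0 < T := lt_min one_pos (by positivity)
  have hT1 : T ≤ 1 := min_le_left _ _
  have hTL : T * L ≤ 1 / 32 := by
    have h1 : T ≤ 1 / (32 * (L + 1)) := min_le_right _ _
    rw [le_div_iff₀ (by positivity)] at h1
    nlinarith
  have γmono : Monotone γ := monotone_nat_of_le_succ fun k => by rw [hγ]; linarith [hα k]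
  have γnn : ∀ n, 0 ≤ γ n := fun n => hγ0 ▸ γmono (Nat.zero_le n)
  obtain ⟨n0, hn0⟩ := eventually_atTop.mp (hα0.eventually (ge_mem_nhds (by positivity : 0 < T / 2)))
  obtain ⟨φ, hφ, hφ0, hτ⟩ := sg_blocks hα hγ hdiv hT0 hn0
  have hlow : ∀ j : ℕ, T / 2 * j ≤ γ (φ j) := by
    intro j
    induction j with
    | zero => simpa using γnn _
    | succ j ih => push_cast; have := (hτ j).1; linarith
  have hup : ∀ j : ℕ, γ (φ j) ≤ γ (φ 0) + j := by
    intro j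
    induction j with
    | zero => simp
    | succ j ih => push_cast; have := (hτ j).2; linarith
  set K1 : ℝ := (T / 2) ^ (-r) with hK1
  have hK1p : 0 < K1 := by positivity
  refine ⟨φ, T / 8, (8 * L + 5 / T) * K1 ^ 2, 2 * (T + K1), γ (φ 0) + 2, hφ, by positivity,
    by positivity, by positivity, by linarith [γnn (φ 0)], ?_, ?_⟩
  · intro j hj
    have h1 := hup (j + 1)
    have h2 : (1 : ℝ) ≤ j := by exact_mod_cast hj
    push_cast at h1
    nlinarith [γnn (φ 0)]
  · intro s hs hNB
    have hNB' := hφ.tendsto_atTop.eventually hNB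
    filter_upwards [hNB', eventually_ge_atTop 1] with j hj hj1
    have hj0 : (0 : ℝ) < j := by exact_mod_cast hj1
    have hη : γ (φ j) ^ (-r) ≤ K1 * (j : ℝ) ^ (-r) := by
      rw [hK1, ← Real.mul_rpow (by positivity) hj0.le]
      exact Real.rpow_le_rpow_of_nonpos (by positivity) (hlow j) (by linarith)
    have hz := hj (φ (j + 1)) (hφ (Nat.lt_succ_self j)).le ((hτ j).2.trans hT1)
    have hb := sg_block hf hS hL hLip hx hα hrec hγ hT0 hTL (hφ (Nat.lt_succ_self j)).le
      (hτ j).1 (hτ j).2 (η := s * (K1 * (j : ℝ) ^ (-r))) (by positivity)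
      (fun k h1 h2 => (hz k h1 h2).trans (mul_le_mul_of_nonneg_left hη hs.le))
    refine ⟨fun k h1 h2 => (hb.1 k h1 h2).trans ?_, hb.2.trans (le_of_eq ?_)⟩
    · have := norm_nonneg (gradient f (x (φ j)))
      have h3 : 0 ≤ s * (j : ℝ) ^ (-r) := by positivity
      nlinarith [mul_nonneg hK1p.le this, mul_nonneg hT0.le h3]
    · have : (j : ℝ) ^ (-(2 * r)) = ((j : ℝ) ^ (-r)) ^ 2 := by
        rw [← Real.rpow_natCast (_ ^ _), ← Real.rpow_mul hj0.le]
        congr 1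
        push_cast; ring
      rw [this]
      ring

lemma sg_path {E : Type*} [NormedAddCommGroup E] [InnerProductSpace ℝ E] [CompleteSpace E]
    {f : E → ℝ} (hf : Differentiable ℝ f) {S : Set E} (hS : Convex ℝ S) {L : ℝ} (hL : 0 ≤ L)
    (hLip : ∀ x ∈ S, ∀ y ∈ S, ‖gradient f y - gradient f x‖ ≤ L * ‖y - x‖)
    {x z : ℕ → E} (hx : ∀ n, x n ∈ S) {α γ : ℕ → ℝ} (hα : ∀ n, 0 < α n)
    (hrec : ∀ n, x (n + 1) = x n - α n • (gradient f (x n) + z n))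
    (hγ0 : γ 0 = 0) (hγ : ∀ n, γ (n + 1) = γ n + α n)
    (hα0 : Tendsto α atTop (nhds 0)) (hdiv : Tendsto γ atTop atTop) {r : ℝ} (hr : 1 < r)
    {B : ℝ} (hB : ∀ n, B ≤ f (x n)) {s0 : ℝ} (hs0 : 0 < s0) (hNB0 : SgNB α γ z r s0) :
    ∃ l, Tendsto (fun n => f (x n)) atTop (nhds l) ∧
      ∀ M μ ρ : ℝ, 0 < M → 0 < μ → 1 < ρ → ρ ≤ r →
        (∀ᶠ n in atTop, |f (x n) - l| ≤ M * ‖gradient f (x n)‖ ^ μ) →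
        ∃ C κ : ℝ, 0 < C ∧ 0 < κ ∧ ∀ s, 0 < s → SgNB α γ z r s →
          (∀ᶠ t in nhdsWithin (0 : ℝ) (Set.Ioi 0),
            s ^ (-(2 / (2 * ρ - 1))) * t ^ (1 + 1 / (2 * ρ - 1)) ≤ κ * t ^ (2 / μ)) →
          ∀ᶠ n in atTop, ∀ k, n ≤ k → γ n ^ (ρ - 1) * ‖x k - x n‖ ≤ C * s := by
  obtain ⟨φ, c, K, D, t, hφ, hc, hK, hD, ht, hγt, hset⟩ :=
    sg_setup hf hS hL hLip hx hα hrec hγ0 hγ hα0 hdiv hr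
  have γmono : Monotone γ := monotone_nat_of_le_succ fun k => by rw [hγ]; linarith [hα k]
  have γnn : ∀ n, 0 ≤ γ n := fun n => hγ0 ▸ γmono (Nat.zero_le n)
  set g : ℕ → ℝ := fun j => ‖gradient f (x (φ j))‖ with hg
  have hg0 : ∀ j, 0 ≤ g j := fun j => norm_nonneg _
  have hset0 := hset s0 hs0 hNB0
  obtain ⟨⟨l, hl⟩, hgt⟩ := sg_conv (y := fun j => f (x (φ j))) (g := g) (B := B) hc
    (by positivity : 0 ≤ K * s0 ^ 2) hr hg0 (fun j => hB _) (hset0.mono fun j hj => hj.2)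
  have hrt : Tendsto (fun j : ℕ => s0 * (j : ℝ) ^ (-r)) atTop (nhds 0) := by
    have := (tendsto_rpow_neg_atTop (y := r) (by linarith)).comp
      (tendsto_natCast_atTop_atTop (R := ℝ))
    simpa using this.const_mul s0
  set Dj : ℕ → ℝ := fun j => D * (g j + s0 * (j : ℝ) ^ (-r)) with hDj
  have hDt : Tendsto Dj atTop (nhds 0) := by simpa using (hgt.add hrt).const_mul D
  have hall : Tendsto (fun n => f (x n)) atTop (nhds l) := by
    have herr : Tendsto (fun j => |f (x (φ j)) - l| + (g j * Dj j + L * Dj j ^ 2)) atTop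
        (nhds 0) := by
      have h1 : Tendsto (fun j => |f (x (φ j)) - l|) atTop (nhds 0) := by
        have := (hl.sub_const l).abs
        simpa using this
      have h2 := (hgt.mul hDt).add ((hDt.pow 2).const_mul L)
      simpa using h1.add h2
    rw [Metric.tendsto_atTop]
    intro ε hε
    obtain ⟨J, hJ⟩ := eventually_atTop.mp ((herr.eventually (gt_mem_nhds hε)).and hset0)
    refine ⟨φ J, fun n hn => ?_⟩
    obtain ⟨j, hj, hj1, hj2⟩ := sg_index hφ hn
    obtain ⟨h1, h2, _⟩ := hJ j hj
    have h3 := h2 n hj1 hj2.le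
    have h4 := abs_le.mp (sg_descent hf hS hL hLip (hx (φ j)) (hx n))
    have h5 := abs_le.mp (abs_real_inner_le_norm (gradient f (x (φ j))) (x n - x (φ j)))
    have h6 : ‖gradient f (x (φ j))‖ * ‖x n - x (φ j)‖ ≤ g j * Dj j :=
      mul_le_mul_of_nonneg_left h3 (hg0 j)
    have h7 : L * ‖x n - x (φ j)‖ ^ 2 ≤ L * Dj j ^ 2 :=
      mul_le_mul_of_nonneg_left (pow_le_pow_left₀ (norm_nonneg _) h3 2) hL
    have h8 := abs_le.mp (le_refl |f (x (φ j)) - l|)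
    rw [Real.dist_eq]
    refine lt_of_le_of_lt (abs_le.mpr ⟨?_, ?_⟩) h1 <;> linarith [h4.1, h4.2, h5.1, h5.2, h8.1, h8.2]
  refine ⟨l, hall, fun M μ ρ hM hμ hρ hρr hLoj => ?_⟩
  obtain ⟨C, hC, hrate⟩ := sg_rate (y := fun j => f (x (φ j)) - l) (g := g) hc hK hM hμ hρ hρr hg0
    (by simpa using hl.sub_const l) (hφ.tendsto_atTop.eventually hLoj)
  set C2 : ℝ := 2 ^ (r - 1 + 1) / (r - 1) with hC2
  have hC2p : 0 < C2 := by have : 0 < r - 1 := by linarith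
                           positivity
  refine ⟨t ^ (ρ - 1) * (2 * D * (C + C2)), c * (1 / (2 * M)) ^ (2 / μ), by positivity,
    by positivity, fun s hs hNB hs2 => ?_⟩
  have hsetS := hset s hs hNB
  have hr1 := hrate s hs (hsetS.mono fun j hj => by linarith [hj.2]) (by
    filter_upwards [hs2, self_mem_nhdsWithin] with u hu hu0
    have hu0 : (0 : ℝ) < u := hu0
    refine hu.trans (le_of_eq ?_)
    rw [mul_assoc, ← Real.mul_rpow (by positivity) hu0.le]
    congr 2
    ring)
  obtain ⟨J0, hJ0⟩ := eventually_atTop.mp (hr1.and hsetS)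
  set J := J0 + 1 with hJ
  filter_upwards [eventually_ge_atTop (φ J)] with n hn k hk
  obtain ⟨j, hj, hj1, hj2⟩ := sg_index hφ hn
  obtain ⟨i, hi, hi1, hi2⟩ := sg_index hφ (hj1.trans hk)
  have hj0 : (0 : ℝ) < j := by exact_mod_cast (by omega : 0 < j)
  set d : ℕ → ℝ := fun j => D * (g j + s * (j : ℝ) ^ (-r)) with hd
  have hd0 : ∀ j, 0 ≤ d j := fun j => by
    have := hg0 j
    positivity
  have hosc : ∀ j, J ≤ j → ∀ k, φ j ≤ k → k ≤ φ (j + 1) → ‖x k - x (φ j)‖ ≤ d j :=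
    fun j hj => (hJ0 j (by omega)).2.1
  have hchain : ∀ i, j ≤ i → ‖x (φ i) - x (φ j)‖ ≤ ∑ l ∈ Finset.Ico j i, d l := by
    intro i hi
    induction i, hi using Nat.le_induction with
    | base => simp
    | succ i hi ih =>
      rw [Finset.sum_Ico_succ_top hi]
      have h1 := hosc i (by omega) (φ (i + 1)) (hφ (Nat.lt_succ_self i)).le le_rfl
      have h2 := norm_add_le (x (φ (i + 1)) - x (φ i)) (x (φ i) - x (φ j))
      rw [sub_add_sub_cancel] at h2
      linarith
  have htot : ‖x k - x n‖ ≤ 2 * ∑ l ∈ Finset.Ico j (i + 1), d l := by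
    have h1 := hosc i (by omega) k hi1 hi2.le
    have h2 := hosc j hj n hj1 hj2.le
    have h3 := hchain i hi
    have h4 : d j ≤ ∑ l ∈ Finset.Ico j (i + 1), d l :=
      Finset.single_le_sum (fun l _ => hd0 l) (Finset.mem_Ico.mpr ⟨le_rfl, by omega⟩)
    rw [Finset.sum_Ico_succ_top hi] at h4 ⊢
    have e : x k - x n = (x k - x (φ i)) + (x (φ i) - x (φ j)) - (x n - x (φ j)) := by abel
    have h5 := norm_sub_le ((x k - x (φ i)) + (x (φ i) - x (φ j))) (x n - x (φ j))
    have h6 := norm_add_le (x k - x (φ i)) (x (φ i) - x (φ j))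
    rw [← e] at h5
    have h7 : 0 ≤ ∑ l ∈ Finset.Ico j i, d l := Finset.sum_nonneg fun l _ => hd0 l
    linarith [hd0 i]
  have hsum : ∑ l ∈ Finset.Ico j (i + 1), d l ≤ D * (C + C2) * s * (j : ℝ) ^ (-(ρ - 1)) := by
    simp only [hd]
    rw [← Finset.mul_sum, Finset.sum_add_distrib, ← Finset.mul_sum]
    have h1 := (hJ0 j (by omega)).1 (i + 1)
    have h2 := sg_sumtail (a := r - 1) (by linarith) (j := j) (m := i + 1) (by omega) (by omega)
    rw [show -(r - 1 + 1) = -r by ring] at h2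
    have h3 : (j : ℝ) ^ (-(r - 1)) ≤ (j : ℝ) ^ (-(ρ - 1)) := by
      apply Real.rpow_le_rpow_of_exponent_le
      · exact_mod_cast (by omega : 1 ≤ j)
      · linarith
    have h4 := h2.trans (mul_le_mul_of_nonneg_left h3 hC2p.le)
    have h5 := mul_le_mul_of_nonneg_left h4 hs.le
    have h6 := mul_le_mul_of_nonneg_left (add_le_add h1 h5) hD.le
    refine h6.trans (le_of_eq ?_)
    ring
  have hγn : γ n ^ (ρ - 1) ≤ t ^ (ρ - 1) * (j : ℝ) ^ (ρ - 1) := by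
    rw [← Real.mul_rpow ht.le hj0.le]
    apply Real.rpow_le_rpow (γnn n) _ (by linarith)
    exact (γmono hj2.le).trans (hγt j (by omega))
  have hjj : (j : ℝ) ^ (ρ - 1) * (j : ℝ) ^ (-(ρ - 1)) = 1 := by
    rw [← Real.rpow_add hj0]; simp
  calc γ n ^ (ρ - 1) * ‖x k - x n‖
      ≤ (t ^ (ρ - 1) * (j : ℝ) ^ (ρ - 1)) * (2 * (D * (C + C2) * s * (j : ℝ) ^ (-(ρ - 1)))) := by
        apply mul_le_mul hγn (htot.trans (by linarith)) (norm_nonneg _) (by positivity)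
    _ = t ^ (ρ - 1) * (2 * D * (C + C2)) * s * ((j : ℝ) ^ (ρ - 1) * (j : ℝ) ^ (-(ρ - 1))) := by ring
    _ = _ := by rw [hjj]; ring

/-- Lemma 1.25 of the paper: under Assumptions 1.1, 1.2, 1.3
there is a random variable `Ĉ₈ ∈ [1,∞)` such that, almost surely on `Λ`, for
every `ε > 0`: `limsup_n γ_n^q̂ · sup_{k ≥ n} ‖θ_k − θ_n‖ ≤ Ĉ₈ φ_ε(ξ)`, where
`q̂ = min{r, r̂} − 1`.
(`limsup` is expressed via: for every `c > bound`, eventually all `k ≥ n`.) -/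
theorem stochastic_gradient_tail_oscillation_bound
    {d : ℕ} (hd : 1 ≤ d)
    {Ω : Type} [MeasurableSpace Ω] (P : Measure Ω) [IsProbabilityMeasure P]
    (f : EuclideanSpace ℝ (Fin d) → ℝ)
    (hfd : Differentiable ℝ f)
    (hlip : LocallyLipschitz (fun x => gradient f x))
    (α : ℕ → ℝ) (hαpos : ∀ n, 0 < α n)
    (θ ξ : ℕ → Ω → EuclideanSpace ℝ (Fin d))
    (hrec : ∀ n ω, θ (n + 1) ω = θ n ω - α n • (gradient f (θ n ω) + ξ n ω))
    -- Assumption 1.1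
    (hα0 : Tendsto α atTop (nhds 0))
    (γ : ℕ → ℝ) (hγ : ∀ n, γ n = ∑ i ∈ Finset.range n, α i)
    (hαdiv : Tendsto γ atTop atTop)
    -- the interpolation index `a(n,t)`
    (a : ℕ → ℝ → ℕ)
    (ha : ∀ n t, 0 < t → a n t = sSup {k | n ≤ k ∧ γ k - γ n ≤ t})
    -- the event Λ
    (Λ : Set Ω) (hΛ : Λ = {ω | ∃ C, ∀ n, ‖θ n ω‖ ≤ C})
    -- Assumption 1.2
    (r : ℝ) (hr : 1 < r)
    (noise : ℕ → Ω → ℝ)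
    (hnoise : ∀ n ω, noise n ω =
      ⨆ k ∈ Set.Ico n (a n 1), ‖∑ i ∈ Finset.Icc n k, (α i * γ i ^ r) • ξ i ω‖)
    (hA12 : ∀ᵐ ω ∂P, ω ∈ Λ → IsBoundedUnder (· ≤ ·) atTop (fun n => noise n ω))
    (Xi : Ω → ℝ) (hXi : ∀ ω, Xi ω = Filter.limsup (fun n => noise n ω) atTop)
    -- Assumption 1.3 (Łojasiewicz-type gradient inequality, with a choice
    -- `δ_{Q,a}, μ_{Q,a}, M_{Q,a}` of the Łojasiewicz data for each compact `Q`
    -- and each value `a ∈ f(Q)`)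
    (δQ μQ MQ : Set (EuclideanSpace ℝ (Fin d)) → ℝ → ℝ)
    (hLoj : ∀ Q : Set (EuclideanSpace ℝ (Fin d)), IsCompact Q → ∀ b ∈ f '' Q,
      δQ Q b ∈ Set.Ioc (0 : ℝ) 1 ∧ μQ Q b ∈ Set.Ioc (1 : ℝ) 2 ∧ 1 ≤ MQ Q b ∧
      ∀ x ∈ Q, |f x - b| ≤ δQ Q b → |f x - b| ≤ MQ Q b * ‖gradient f x‖ ^ μQ Q b)
    -- the local Łojasiewicz data `δ_θ, μ_θ, M_θ` provided by Assumption 1.3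
    (δl μl Ml : EuclideanSpace ℝ (Fin d) → ℝ)
    (hδl : ∀ x, δl x ∈ Set.Ioc (0 : ℝ) 1)
    (hμl : ∀ x, μl x ∈ Set.Ioc (1 : ℝ) 2)
    (hMl : ∀ x, 1 ≤ Ml x)
    (hLocal : ∀ x y, ‖y - x‖ ≤ δl x → |f y - f x| ≤ Ml x * ‖gradient f y‖ ^ μl x)
    -- `f̂ = liminf_n f(θ_n)`
    (fhat : Ω → ℝ)
    (hfhat : ∀ ω, fhat ω = Filter.liminf (fun n => f (θ n ω)) atTop)
    -- `Â` = set of accumulation points of `{θ_n}`, and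
    -- `Q̂ = cl(⋃_{θ ∈ Â} {θ' : ‖θ' − θ‖ ≤ δ_θ/2})`
    (Ahat : Ω → Set (EuclideanSpace ℝ (Fin d)))
    (hAhat : ∀ ω, Ahat ω = {x | MapClusterPt x atTop (fun n => θ n ω)})
    (Qhat : Ω → Set (EuclideanSpace ℝ (Fin d)))
    (hQhat : ∀ ω, Qhat ω = closure (⋃ x ∈ Ahat ω, Metric.closedBall x (δl x / 2)))
    -- `μ̂ = μ_{Q̂,f̂}`, `r̂ = 1/(2−μ̂)` (`= ∞` if `μ̂ = 2`), `p̂ = μ̂ min{r,r̂}`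
    (μhat : Ω → ℝ) (hμhat : ∀ ω, μhat ω = μQ (Qhat ω) (fhat ω))
    (qhat : Ω → ℝ)
    (hqhat : ∀ ω, qhat ω =
      (if μhat ω < 2 then min r (1 / (2 - μhat ω)) else r) - 1)
    -- `φ_ε(ξ) = φ(ξ) + ε` where `φ(ξ) = ξ` if `r < r̂`, `1 + ξ` if `r = r̂`,
    -- and `1` if `r > r̂`
    (φe : Ω → ℝ → ℝ)
    (hφe : ∀ ω ε, φe ω ε =
      (if μhat ω = 2 ∨ r < 1 / (2 - μhat ω) then Xi ω
        else if r = 1 / (2 - μhat ω) then 1 + Xi ω else 1) + ε) :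
    ∃ C₈ : Ω → ℝ, (∀ ω, 1 ≤ C₈ ω) ∧
      ∀ᵐ ω ∂P, ω ∈ Λ → ∀ ε : ℝ, 0 < ε →
        ∀ c : ℝ, C₈ ω * φe ω ε < c →
          ∀ᶠ n in atTop, ∀ k, n ≤ k → γ n ^ qhat ω * ‖θ k ω - θ n ω‖ ≤ c := by
  classical
  have key : ∀ᵐ ω ∂P, ω ∈ Λ → ∃ C : ℝ, 1 ≤ C ∧ ∀ ε : ℝ, 0 < ε →
        ∀ c : ℝ, C * φe ω ε < c →
          ∀ᶠ n in atTop, ∀ k, n ≤ k → γ n ^ qhat ω * ‖θ k ω - θ n ω‖ ≤ c := by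
    filter_upwards [hA12] with ω hbdd hω
    have hbdd := hbdd hω
    rw [hΛ] at hω
    obtain ⟨B, hB⟩ := hω
    -- basic facts on γ
    have hγ0 : γ 0 = 0 := by simp [hγ]
    have hγs : ∀ n, γ (n + 1) = γ n + α n := fun n => by
      rw [hγ, hγ, Finset.sum_range_succ]
    have γmono : Monotone γ := monotone_nat_of_le_succ fun k => by rw [hγs]; linarith [hαpos k]
    -- Lipschitz constant on the ball
    set S := Metric.closedBall (0 : EuclideanSpace ℝ (Fin d)) B with hS
    have hScpt : IsCompact S := isCompact_closedBall _ _
    have hxS : ∀ n, θ n ω ∈ S := fun n => by simpa [hS] using hB n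
    obtain ⟨L, hL⟩ := LocallyLipschitzOn.exists_lipschitzOnWith_of_compact hScpt
      hlip.locallyLipschitzOn
    have hLip : ∀ x ∈ S, ∀ y ∈ S, ‖gradient f y - gradient f x‖ ≤ (L : ℝ) * ‖y - x‖ := by
      intro x hx y hy
      have := hL.dist_le_mul y hy x hx
      rwa [dist_eq_norm, dist_eq_norm] at this
    obtain ⟨b, hb⟩ := hScpt.bddBelow_image hfd.continuous.continuousOn
    have hfb : ∀ n, b ≤ f (θ n ω) := fun n => hb ⟨_, hxS n, rfl⟩
    -- noise
    have hnn : ∀ n, 0 ≤ noise n ω := fun n => by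
      rw [hnoise]
      exact Real.iSup_nonneg fun k => Real.iSup_nonneg fun _ => norm_nonneg _
    have hXi0 : 0 ≤ Xi ω := by
      rw [hXi]
      exact le_limsup_of_frequently_le (Frequently.of_forall hnn) hbdd
    have hNB : ∀ s, Xi ω < s → SgNB α γ (fun n => ξ n ω) r s := by
      intro s hs
      rw [hXi] at hs
      have h1 := eventually_lt_of_limsup_lt hs hbdd
      filter_upwards [h1, hαdiv.eventually_gt_atTop 0] with n hn hγn m hnm hm
      rw [hnoise] at hn
      refine sg_noise γmono hαdiv (by linarith) (ha n 1 one_pos) ?_ hn.le hγn hnm hm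
      have := hnn n
      rw [hnoise] at this
      linarith
    obtain ⟨l, hl, hmain⟩ := sg_path hfd (convex_closedBall _ _) L.coe_nonneg hLip hxS hαpos
      (fun n => hrec n ω) hγ0 hγs hα0 hαdiv hr hfb (by linarith : 0 < Xi ω + 1)
      (hNB _ (by linarith))
    have hfl : fhat ω = l := by rw [hfhat]; exact hl.liminf_eq
    -- cluster set
    have hAS : Ahat ω ⊆ S := by
      intro x hx
      rw [hAhat] at hx
      exact isClosed_iff_clusterPt.mp Metric.isClosed_closedBall x
        (ClusterPt.mono hx (tendsto_principal.mpr (Eventually.of_forall hxS)))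
    have hQsub : ∀ x ∈ Ahat ω, Metric.closedBall x (δl x / 2) ⊆ Qhat ω := by
      intro x hx
      rw [hQhat]
      exact (Set.subset_biUnion_of_mem (u := fun x => Metric.closedBall x (δl x / 2)) hx).trans
        subset_closure
    have hQc : IsCompact (Qhat ω) := by
      refine (isCompact_closedBall (0 : EuclideanSpace ℝ (Fin d)) (B + 1)).of_isClosed_subset
        (by rw [hQhat]; exact isClosed_closure) ?_
      rw [hQhat]
      refine closure_minimal ?_ Metric.isClosed_closedBall
      refine Set.iUnion₂_subset fun x hx => ?_
      apply Metric.closedBall_subset_closedBall'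
      have h1 := hAS hx
      rw [hS, Metric.mem_closedBall] at h1
      have h2 := (hδl x).2
      linarith [(hδl x).1]
    have hmem : fhat ω ∈ f '' Qhat ω := by
      obtain ⟨x, hx, hcl⟩ := hScpt.exists_mapClusterPt (f := atTop) (u := fun n => θ n ω)
        (tendsto_principal.mpr (Eventually.of_forall hxS))
      have hxA : x ∈ Ahat ω := by rw [hAhat]; exact hcl
      refine ⟨x, hQsub x hxA (Metric.mem_closedBall_self (by linarith [(hδl x).1])), ?_⟩
      have h1 := MapClusterPt.continuousAt_comp (hfd.continuous.continuousAt (x := x)) hcl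
      rw [hfl]
      have h2 : ClusterPt (f x) (nhds l) := ClusterPt.mono h1 hl
      exact eq_of_nhds_neBot h2
    have hevQ : ∀ᶠ n in atTop, θ n ω ∈ Qhat ω := by
      by_contra hc
      set U : Set (EuclideanSpace ℝ (Fin d)) := ⋃ x ∈ Ahat ω, Metric.ball x (δl x / 2) with hU
      have hUo : IsOpen U := isOpen_biUnion fun x _ => Metric.isOpen_ball
      have hUQ : U ⊆ Qhat ω :=
        Set.iUnion₂_subset fun x hx => Metric.ball_subset_closedBall.trans (hQsub x hx)
      have hfreq : ∃ᶠ n in atTop, θ n ω ∈ S \ U := by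
        rw [not_eventually] at hc
        exact hc.mono fun n hn => ⟨hxS n, fun h => hn (hUQ h)⟩
      obtain ⟨x, hx, hcl⟩ := (hScpt.diff hUo).exists_mapClusterPt_of_frequently hfreq
      have hxA : x ∈ Ahat ω := by rw [hAhat]; exact hcl
      exact hx.2 (Set.mem_biUnion hxA (Metric.mem_ball_self (by linarith [(hδl x).1])))
    obtain ⟨hδ, hμ, hM, hineq⟩ := hLoj (Qhat ω) hQc (fhat ω) hmem
    rw [← hμhat] at hμ hineq
    set μ := μhat ω with hμdef
    have hLojn : ∀ᶠ n in atTop,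
        |f (θ n ω) - l| ≤ MQ (Qhat ω) (fhat ω) * ‖gradient f (θ n ω)‖ ^ μ := by
      have h1 : ∀ᶠ n in atTop, |f (θ n ω) - l| < δQ (Qhat ω) (fhat ω) := by
        have h2 : Tendsto (fun n => |f (θ n ω) - l|) atTop (nhds 0) := by
          simpa using (hl.sub_const l).abs
        exact h2.eventually (gt_mem_nhds hδ.1)
      filter_upwards [hevQ, h1] with n hn1 hn2
      have := hineq (θ n ω) hn1
      rw [hfl] at this
      rw [hfl] at hn2 ⊢
      exact this hn2.le
    obtain ⟨hμ1, hμ2⟩ := hμ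
    by_cases hcase : μ = 2 ∨ r < 1 / (2 - μ)
    · -- noise dominated case
      have hq : qhat ω = r - 1 := by
        rw [hqhat]
        split_ifs with h
        · rw [min_eq_left]
          rcases hcase with h' | h'
          · exact absurd h' h.ne
          · exact h'.le
        · rfl
      have hexp : 2 / μ < 1 + 1 / (2 * r - 1) := by
        have hp : 0 < 2 * r - 1 := by linarith
        have e : 1 + 1 / (2 * r - 1) = 2 * r / (2 * r - 1) := by field_simp; ring
        rw [e, div_lt_div_iff₀ (by linarith) hp]
        rcases eq_or_lt_of_le hμ2 with h | h
        · rw [h]; linarith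
        · have h' := hcase.resolve_left h.ne
          rw [lt_div_iff₀ (by linarith)] at h'
          linarith
      obtain ⟨C, κ, hC, hκ, hfin⟩ := hmain (MQ (Qhat ω) (fhat ω)) μ r (by linarith) (by linarith)
        hr le_rfl hLojn
      refine ⟨max 1 C, le_max_left _ _, fun ε hε c hc => ?_⟩
      rw [hφe, if_pos hcase] at hc
      have hs : 0 < Xi ω + ε := by linarith
      have hev := hfin (Xi ω + ε) hs (hNB _ (by linarith)) (by
        have h1 : Tendsto (fun t : ℝ => (Xi ω + ε) ^ (-(2 / (2 * r - 1)))
            * t ^ (1 + 1 / (2 * r - 1) - 2 / μ)) (nhdsWithin 0 (Set.Ioi 0)) (nhds 0) := by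
          have h2 := (Real.continuousAt_rpow_const (0 : ℝ) (1 + 1 / (2 * r - 1) - 2 / μ)
            (Or.inr (by linarith))).tendsto
          rw [Real.zero_rpow (by linarith)] at h2
          simpa using (h2.mono_left nhdsWithin_le_nhds).const_mul
            ((Xi ω + ε) ^ (-(2 / (2 * r - 1))))
        filter_upwards [h1.eventually (gt_mem_nhds hκ), self_mem_nhdsWithin] with t ht ht0
        have ht0 : (0 : ℝ) < t := ht0
        have h3 : t ^ (1 + 1 / (2 * r - 1))
            = t ^ (1 + 1 / (2 * r - 1) - 2 / μ) * t ^ (2 / μ) := by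
          rw [← Real.rpow_add ht0]; congr 1; ring
        rw [h3, ← mul_assoc]
        exact mul_le_mul_of_nonneg_right ht.le (by positivity))
      filter_upwards [hev] with n hn k hk
      rw [hq]
      refine (hn k hk).trans (le_trans ?_ hc.le)
      exact mul_le_mul_of_nonneg_right (le_max_right _ _) hs.le
    · -- gradient dominated case
      have hμlt : μ < 2 := lt_of_le_of_ne hμ2 fun h => hcase (Or.inl h)
      have hrr : 1 / (2 - μ) ≤ r := not_lt.mp fun h => hcase (Or.inr h)
      have h2μ : 0 < 2 - μ := by linarith
      have hq : qhat ω = 1 / (2 - μ) - 1 := by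
        rw [hqhat, if_pos hμlt, min_eq_right hrr]
      have hρ : 1 < 1 / (2 - μ) := by rw [lt_div_iff₀ h2μ]; linarith
      obtain ⟨C, κ, hC, hκ, hfin⟩ := hmain (MQ (Qhat ω) (fhat ω)) μ (1 / (2 - μ)) (by linarith)
        (by linarith) hρ hrr hLojn
      set p := 2 * (1 / (2 - μ)) - 1 with hp
      have hp0 : 0 < p := by linarith
      have hpe : p = μ / (2 - μ) := by rw [hp]; field_simp; ring
      have hexp : 1 + 1 / p = 2 / μ := by
        rw [hpe]; field_simp; ring
      have h1 := tendsto_rpow_neg_atTop (y := 2 / p) (by positivity)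
      obtain ⟨s, hs1, hs2⟩ := ((h1.eventually (gt_mem_nhds hκ)).and
        (eventually_gt_atTop (Xi ω))).exists
      have hs : 0 < s := by linarith
      have hev := hfin s hs (hNB s hs2) (by
        filter_upwards [self_mem_nhdsWithin] with t ht0
        have ht0 : (0 : ℝ) < t := ht0
        rw [hexp]
        exact mul_le_mul_of_nonneg_right hs1.le (by positivity))
      refine ⟨max 1 (C * s), le_max_left _ _, fun ε hε c hc => ?_⟩
      have hφ1 : 1 ≤ φe ω ε := by
        rw [hφe, if_neg hcase]
        split_ifs <;> linarith
      filter_upwards [hev] with n hn k hk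
      rw [hq]
      refine (hn k hk).trans (le_trans ?_ hc.le)
      have h3 := le_max_right 1 (C * s)
      have h4 : 0 < C * s := by positivity
      nlinarith
  refine ⟨fun ω => if h : ∃ C : ℝ, 1 ≤ C ∧ ∀ ε : ℝ, 0 < ε →
        ∀ c : ℝ, C * φe ω ε < c →
          ∀ᶠ n in atTop, ∀ k, n ≤ k → γ n ^ qhat ω * ‖θ k ω - θ n ω‖ ≤ c
      then h.choose else 1, fun ω => ?_, ?_⟩
  · dsimp only
    split_ifs with h
    · exact h.choose_spec.1
    · exact le_rfl
  · filter_upwards [key] with ω hω hωΛ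
    have h := hω hωΛ
    rw [dif_pos h]
    exact h.choose_spec.2
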